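/- Let 𝔞 be a cofinite monomial ideal in k[x₁,…,x_d] and let x ∈ P(𝔞) be a point all of whose coordinates are strictly positive. Then x ∈ P(𝔞) \ int(P(𝔞)) if and only if there exists a vector a ∈ ℝ^d with all coordinates strictly positive such that ⟨a, x⟩ ≤ ⟨a, y⟩ for all y ∈ P(𝔞). Moreover, in that case ⟨a, x⟩ > 0 and the exposed face {y ∈ P(𝔞) : ⟨a, y⟩ = ⟨a, x⟩} is compact. (Geometric core of Theorem 5.2: the part of the boundary of the Newton polyhedron lying off the coordinate hyperplanes is exactly the union of its bounded faces.) -/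

import Mathlib

open Set Filter Pointwise MeasureTheory

/-- The map sending a vector of natural number exponents to the corresponding
real vector. -/
noncomputable def expToReal (d : ℕ) (v : Fin d → ℕ) : Fin d → ℝ := fun i => (v i : ℝ)

/-- The Newton polyhedron of a monomial ideal with exponent set `S`:
the convex hull in `ℝ^d` of the exponent vectors. -/
noncomputable def newtonPoly (d : ℕ) (S : Set (Fin d → ℕ)) : Set (Fin d → ℝ) :=
  convexHull ℝ (expToReal d '' S)

/-- The multiplicity `m(c)` of `c > 0` as a (candidate) jumping number of the monomial
ideal with exponent set `S`: the number of `v ∈ ℕ^d` with `v + 𝟏` on the boundary part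
`c•P(𝔞) \ int(c•P(𝔞))` of the dilated Newton polyhedron. -/
noncomputable def multJump (d : ℕ) (S : Set (Fin d → ℕ)) (c : ℝ) : ℕ :=
  Nat.card {v : Fin d → ℕ |
    expToReal d v + 1 ∈ c • newtonPoly d S \ interior (c • newtonPoly d S)}

theorem convexHull_range_natCast : convexHull ℝ (range ((↑) : ℕ → ℝ)) = Ici 0 := by
  refine Subset.antisymm (convexHull_min ?_ (convex_Ici 0)) fun t ht => ?_
  · rintro _ ⟨n, rfl⟩
    exact Nat.cast_nonneg (α := ℝ) n
  · obtain ⟨n, hn⟩ := exists_nat_ge t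
    refine (convex_convexHull ℝ (range ((↑) : ℕ → ℝ))).ordConnected.out
      (subset_convexHull ℝ _ ⟨0, rfl⟩) (subset_convexHull ℝ _ ⟨n, rfl⟩) ⟨?_, hn⟩
    simpa using ht

theorem convexHull_range_expToReal (d : ℕ) :
    convexHull ℝ (range (expToReal d)) = Ici 0 := by
  have h : range (expToReal d) = univ.pi fun _ => range ((↑) : ℕ → ℝ) := by
    ext y
    simp only [mem_range, mem_univ_pi]
    refine ⟨?_, fun hy => ?_⟩
    · rintro ⟨v, rfl⟩ i
      exact ⟨v i, rfl⟩
    · choose v hv using hy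
      exact ⟨v, funext hv⟩
  rw [h, convexHull_pi, convexHull_range_natCast, pi_univ_Ici]
  rfl

theorem expToReal_add (d : ℕ) (v w : Fin d → ℕ) :
    expToReal d (v + w) = expToReal d v + expToReal d w := by
  ext i
  simp [expToReal]

/-- Points outside the box `[0, M]` containing the complement of `S` lie in `S`. -/
theorem exists_forall_lt_mem {d : ℕ} {S : Set (Fin d → ℕ)}
    (hcof : (Sᶜ : Set (Fin d → ℕ)).Finite) :
    ∃ M : Fin d → ℕ, ∀ v : Fin d → ℕ, ∀ i, M i < v i → v ∈ S := by
  obtain ⟨M, hM⟩ := hcof.bddAbove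
  refine ⟨M, fun v i hi => ?_⟩
  by_contra hv
  exact absurd (hM hv i) (not_le.mpr hi)

/-- The Newton polyhedron is the sum of a polytope and the nonnegative orthant. -/
theorem exists_finite_newtonPoly_eq {d : ℕ} {S : Set (Fin d → ℕ)}
    (hS : ∀ v ∈ S, ∀ w : Fin d → ℕ, v + w ∈ S)
    (hcof : (Sᶜ : Set (Fin d → ℕ)).Finite) :
    ∃ F : Set (Fin d → ℝ), F.Finite ∧ newtonPoly d S = convexHull ℝ F + Ici 0 := by
  obtain ⟨M, hM⟩ := exists_forall_lt_mem hcof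
  have hS' : expToReal d '' S =
      expToReal d '' (S ∩ Iic (M + 1)) + range (expToReal d) := by
    refine Subset.antisymm ?_ ?_
    · rintro _ ⟨v, hv, rfl⟩
      refine ⟨_, ⟨v ⊓ (M + 1), ⟨?_, mem_Iic.mpr inf_le_right⟩, rfl⟩, _, ⟨v - (M + 1), rfl⟩, ?_⟩
      · by_cases hle : v ≤ M + 1
        · rwa [inf_eq_left.mpr hle]
        · obtain ⟨i, hi⟩ := not_forall.mp hle
          refine hM _ i ?_
          simp only [Pi.add_apply, Pi.one_apply, Pi.inf_apply] at hi ⊢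
          omega
      · change expToReal d _ + expToReal d _ = _
        rw [← expToReal_add]
        congr 1
        ext i
        simp only [Pi.add_apply, Pi.one_apply, Pi.inf_apply, Pi.sub_apply]
        omega
    · rintro _ ⟨_, ⟨v, hv, rfl⟩, _, ⟨w, rfl⟩, rfl⟩
      exact ⟨v + w, hS v hv.1 w, expToReal_add d v w⟩
  refine ⟨expToReal d '' (S ∩ Iic (M + 1)),
    ((finite_Iic (M + 1)).subset inter_subset_right).image _, ?_⟩
  rw [newtonPoly, hS', convexHull_add, convexHull_range_expToReal]

theorem isClosed_newtonPoly {d : ℕ} {S : Set (Fin d → ℕ)}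
    (hS : ∀ v ∈ S, ∀ w : Fin d → ℕ, v + w ∈ S)
    (hcof : (Sᶜ : Set (Fin d → ℕ)).Finite) : IsClosed (newtonPoly d S) := by
  obtain ⟨F, hF, hP⟩ := exists_finite_newtonPoly_eq hS hcof
  rw [hP]
  exact isClosed_Ici.add_left_of_isCompact (hF.isCompact_convexHull ℝ)

theorem add_mem_newtonPoly {d : ℕ} {S : Set (Fin d → ℕ)}
    (hS : ∀ v ∈ S, ∀ w : Fin d → ℕ, v + w ∈ S)
    (hcof : (Sᶜ : Set (Fin d → ℕ)).Finite) {y z : Fin d → ℝ}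
    (hy : y ∈ newtonPoly d S) (hz : 0 ≤ z) : y + z ∈ newtonPoly d S := by
  obtain ⟨F, -, hP⟩ := exists_finite_newtonPoly_eq hS hcof
  rw [hP] at hy ⊢
  obtain ⟨p, hp, q, hq, rfl⟩ := hy
  exact ⟨p, hp, q + z, add_nonneg hq hz, (add_assoc p q z).symm⟩

theorem newtonPoly_subset_Ici (d : ℕ) (S : Set (Fin d → ℕ)) : newtonPoly d S ⊆ Ici 0 :=
  convexHull_range_expToReal d ▸ convexHull_mono (image_subset_range _ _)

theorem interior_newtonPoly_nonempty {d : ℕ} {S : Set (Fin d → ℕ)}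
    (hS : ∀ v ∈ S, ∀ w : Fin d → ℕ, v + w ∈ S)
    (hcof : (Sᶜ : Set (Fin d → ℕ)).Finite) {x : Fin d → ℝ} (hx : x ∈ newtonPoly d S) :
    (interior (newtonPoly d S)).Nonempty := by
  refine ⟨x + 1, mem_interior.mpr ⟨univ.pi fun i => Ioi (x i), fun y hy => ?_,
    isOpen_set_pi finite_univ fun _ _ => isOpen_Ioi, fun i _ => by simp⟩⟩
  rw [← add_sub_cancel x y]
  exact add_mem_newtonPoly hS hcof hx (sub_nonneg.mpr fun i => (hy i trivial).le)

/-- A boundary point of the Newton polyhedron off the coordinate hyperplanes minimizes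
a linear functional with strictly positive coefficients. -/
theorem exists_pos_minimized_of_notMem_interior {d : ℕ} {S : Set (Fin d → ℕ)}
    (hS : ∀ v ∈ S, ∀ w : Fin d → ℕ, v + w ∈ S)
    (hcof : (Sᶜ : Set (Fin d → ℕ)).Finite) {x : Fin d → ℝ} (hx : x ∈ newtonPoly d S)
    (hxpos : ∀ i, 0 < x i) (hxint : x ∉ interior (newtonPoly d S)) :
    ∃ a : Fin d → ℝ, (∀ i, 0 < a i) ∧
      ∀ y ∈ newtonPoly d S, ∑ i, a i * x i ≤ ∑ i, a i * y i := by
  have hconv : Convex ℝ (newtonPoly d S) := convex_convexHull ℝ _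
  have hne := interior_newtonPoly_nonempty hS hcof hx
  obtain ⟨f, hf⟩ := geometric_hahn_banach_point_open hconv.interior isOpen_interior hxint
  have hfP : ∀ y ∈ newtonPoly d S, f x ≤ f y := fun y hy => by
    have hy' : y ∈ closure (interior (newtonPoly d S)) := by
      rw [hconv.closure_interior_eq_closure_of_nonempty_interior hne]
      exact subset_closure hy
    exact closure_minimal (fun z hz => (hf z hz).le)
      (isClosed_Ici.preimage f.continuous) hy'
  have hsum : ∀ y, f y = ∑ i, f (Pi.single i 1) * y i := fun y => by
    conv_lhs => rw [pi_eq_sum_univ' y]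
    simp [mul_comm]
  have hnonneg : ∀ i, 0 ≤ f (Pi.single i 1) := fun i => by
    have h := hfP _ (add_mem_newtonPoly hS hcof hx
      (Pi.single_nonneg.mpr (zero_le_one (α := ℝ)) : 0 ≤ Pi.single i (1 : ℝ)))
    rw [map_add] at h
    linarith
  refine ⟨fun i => f (Pi.single i 1), fun i => (hnonneg i).lt_of_ne fun hi => ?_,
    fun y hy => by rw [← hsum x, ← hsum y]; exact hfP y hy⟩
  obtain ⟨M, hM⟩ := exists_forall_lt_mem hcof
  have hmem : expToReal d (Pi.single i (M i + 1)) ∈ newtonPoly d S :=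
    subset_convexHull ℝ _ ⟨_, hM _ i (by simp), rfl⟩
  have hle := hfP _ hmem
  have hzero : f (expToReal d (Pi.single i (M i + 1))) = 0 := by
    rw [hsum]
    refine Finset.sum_eq_zero fun j _ => ?_
    rcases eq_or_ne j i with rfl | hj
    · rw [← hi, zero_mul]
    · simp [expToReal, hj]
  have hterm : ∀ j ∈ Finset.univ, 0 ≤ f (Pi.single j 1) * x j :=
    fun j _ => mul_nonneg (hnonneg j) (hxpos j).le
  have hfx : f x = 0 := le_antisymm (hzero ▸ hle) (hsum x ▸ Finset.sum_nonneg hterm)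
  have hcoeff : ∀ j, f (Pi.single j 1) = 0 := fun j => by
    have h := (Finset.sum_eq_zero_iff_of_nonneg hterm).mp (hsum x ▸ hfx) j (Finset.mem_univ j)
    exact (mul_eq_zero.mp h).resolve_right (hxpos j).ne'
  obtain ⟨y, hy⟩ := hne
  have hlt := hf y hy
  rw [hfx, hsum y] at hlt
  simp [hcoeff] at hlt

theorem notMem_interior_of_minimized {d : ℕ} (hd : 1 ≤ d) {P : Set (Fin d → ℝ)}
    {x a : Fin d → ℝ} (ha : ∀ i, 0 < a i)
    (hmin : ∀ y ∈ P, ∑ i, a i * x i ≤ ∑ i, a i * y i) : x ∉ interior P := by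
  intro hx
  have hcont : Tendsto (fun t : ℝ => x - t • (1 : Fin d → ℝ)) (nhdsWithin 0 (Ioi 0)) (nhds x) := by
    have h : Continuous fun t : ℝ => x - t • (1 : Fin d → ℝ) := by fun_prop
    simpa using (h.tendsto 0).mono_left nhdsWithin_le_nhds
  obtain ⟨t, htP, ht⟩ :=
    ((hcont.eventually (mem_interior_iff_mem_nhds.mp hx)).and self_mem_nhdsWithin).exists
  refine absurd (hmin _ htP) (not_le.mpr ?_)
  have : Nonempty (Fin d) := ⟨⟨0, hd⟩⟩
  refine Finset.sum_lt_sum_of_nonempty Finset.univ_nonempty fun i _ => ?_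
  refine mul_lt_mul_of_pos_left ?_ (ha i)
  have ht' : (0 : ℝ) < t := ht
  simpa using ht'

theorem isCompact_level_of_pos {d : ℕ} {P : Set (Fin d → ℝ)} (hP : IsClosed P)
    (hP0 : P ⊆ Ici 0) {a : Fin d → ℝ} (ha : ∀ i, 0 < a i) (c : ℝ) :
    IsCompact {y ∈ P | ∑ i, a i * y i = c} := by
  refine (isCompact_Icc (a := 0) (b := fun i => c / a i)).of_isClosed_subset
    (hP.inter (isClosed_eq (by fun_prop) continuous_const)) ?_
  rintro y ⟨hy, hyc⟩
  refine ⟨hP0 hy, fun i => ?_⟩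
  rw [le_div_iff₀ (ha i), mul_comm, ← hyc]
  exact Finset.single_le_sum (f := fun j => a j * y j)
    (fun j _ => mul_nonneg (ha j).le (hP0 hy j)) (Finset.mem_univ i)

/-- Geometric core of Theorem 5.2: a point of the Newton polyhedron of a cofinite monomial
ideal with all coordinates strictly positive lies on the boundary `P(𝔞) \ int(P(𝔞))` iff it
minimizes some linear functional with strictly positive coefficients over `P(𝔞)`; moreover
for such a functional the minimal value is positive and the exposed face is compact. -/
theorem boundary_off_hyperplanes_is_bounded_faces (d : ℕ) (hd : 1 ≤ d) (k : Type*) [Field k]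
    (S : Set (Fin d → ℕ)) (hS : ∀ v ∈ S, ∀ w : Fin d → ℕ, v + w ∈ S)
    (hcof : (Sᶜ : Set (Fin d → ℕ)).Finite)
    (x : Fin d → ℝ) (hx : x ∈ newtonPoly d S) (hxpos : ∀ i, 0 < x i) :
    (x ∈ newtonPoly d S \ interior (newtonPoly d S) ↔
      ∃ a : Fin d → ℝ, (∀ i, 0 < a i) ∧
        ∀ y ∈ newtonPoly d S, ∑ i, a i * x i ≤ ∑ i, a i * y i) ∧
    (∀ a : Fin d → ℝ, (∀ i, 0 < a i) →
      (∀ y ∈ newtonPoly d S, ∑ i, a i * x i ≤ ∑ i, a i * y i) →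
      x ∈ newtonPoly d S \ interior (newtonPoly d S) →
      0 < ∑ i, a i * x i ∧
        IsCompact {y ∈ newtonPoly d S | ∑ i, a i * y i = ∑ i, a i * x i}) := by
  refine ⟨⟨fun h => exists_pos_minimized_of_notMem_interior hS hcof hx hxpos h.2, ?_⟩, ?_⟩
  · rintro ⟨a, ha, hmin⟩
    exact ⟨hx, notMem_interior_of_minimized hd ha hmin⟩
  · intro a ha _ _
    have : Nonempty (Fin d) := ⟨⟨0, hd⟩⟩
    exact ⟨Finset.sum_pos (fun i _ => mul_pos (ha i) (hxpos i)) Finset.univ_nonempty,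
      isCompact_level_of_pos (isClosed_newtonPoly hS hcof) (newtonPoly_subset_Ici d S) ha _⟩
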